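/- Let ℓ be a prime, k an algebraic closure of the field with ℓ elements, G a normal subgroup of a finite group Ĝ, b a block of kG, and B a block of kĜ such that B·b ≠ 0 (i.e. B covers b) and σ(B) = B. Then b and σ(b) are Ĝ-conjugate, i.e. there exists ĝ ∈ Ĝ with ĝ b ĝ⁻¹ = σ(b), and consequently kGb is isomorphic as a k-algebra to its first Frobenius twist; in particular mf(kGb) = 1. -/

import Mathlib

/-- A central idempotent of a ring. -/
def IsCentralIdem {R : Type*} [Ring R] (b : R) : Prop :=
  (∀ x, b * x = x * b) ∧ b * b = b

/-- A block of a ring: a primitive idempotent of the center, i.e. a nonzero central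
idempotent that is not a sum of two nonzero orthogonal central idempotents. -/
def IsBlock {R : Type*} [Ring R] (b : R) : Prop :=
  IsCentralIdem b ∧ b ≠ 0 ∧
    ∀ c d : R, IsCentralIdem c → IsCentralIdem d → c * d = 0 → b = c + d →
      c = 0 ∨ d = 0

/-- Galois conjugation `σ : kG → kG`, raising each coefficient to the `ℓ`-th power. -/
noncomputable def galois (ℓ : ℕ) (k : Type*) [Field k] [Fact ℓ.Prime] [CharP k ℓ]
    {G : Type*} [Group G] (x : MonoidAlgebra k G) : MonoidAlgebra k G :=
  MonoidAlgebra.ofCoeff (Finsupp.mapRange (frobenius k ℓ) (map_zero _) x.coeff)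

/-- The corner ideal `kG·b` of a central idempotent `b`, as a set. -/
def cornerSet {R : Type*} [Ring R] (b : R) : Set R := {x | x * b = x}

open MonoidAlgebra in
noncomputable def sgE (ℓ : ℕ) (k : Type) [Field k] [IsAlgClosed k] [Fact ℓ.Prime] [CharP k ℓ]
    (G : Type) [Group G] : MonoidAlgebra k G ≃+* MonoidAlgebra k G :=
  RingEquiv.ofRingHom (mapRingHom G (frobeniusEquiv k ℓ : k →+* k))
    (mapRingHom G ((frobeniusEquiv k ℓ).symm : k →+* k))
    (by rw [← mapRingHom_comp]; simp) (by rw [← mapRingHom_comp]; simp)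

theorem sgE_apply (ℓ : ℕ) (k : Type) [Field k] [IsAlgClosed k] [Fact ℓ.Prime] [CharP k ℓ]
    (G : Type) [Group G] (x : MonoidAlgebra k G) : sgE ℓ k G x = galois ℓ k x := by
  ext a
  simp [sgE, galois, frobenius_def]

theorem sgE_single (ℓ : ℕ) (k : Type) [Field k] [IsAlgClosed k] [Fact ℓ.Prime] [CharP k ℓ]
    (G : Type) [Group G] (g : G) (c : k) :
    sgE ℓ k G (MonoidAlgebra.single g c) = MonoidAlgebra.single g (c ^ ℓ) := by
  simp [sgE, frobenius_def]

noncomputable def cjE (k : Type) [Field k] {Ghat : Type} [Group Ghat] (G : Subgroup Ghat)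
    [G.Normal] : Ghat →* (MonoidAlgebra k G ≃ₐ[k] MonoidAlgebra k G) :=
  (MonoidAlgebra.domCongrAut (R := k) (A := k)).comp MulAut.conjNormal

theorem cjE_single (k : Type) [Field k] {Ghat : Type} [Group Ghat] (G : Subgroup Ghat)
    [G.Normal] (g : Ghat) (h : G) (c : k) :
    cjE k G g (MonoidAlgebra.single h c) = MonoidAlgebra.single (MulAut.conjNormal g h) c := by
  simp [cjE]

theorem map_cjE (k : Type) [Field k] {Ghat : Type} [Group Ghat] (G : Subgroup Ghat)
    [G.Normal] (g : Ghat) (x : MonoidAlgebra k G) :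
    MonoidAlgebra.mapDomainRingHom k G.subtype (cjE k G g x) =
      MonoidAlgebra.single g (1 : k) * MonoidAlgebra.mapDomainRingHom k G.subtype x *
        MonoidAlgebra.single g⁻¹ (1 : k) := by
  induction x using MonoidAlgebra.induction_linear with
  | zero => simp
  | add x y hx hy => simp only [map_add, hx, hy, mul_add, add_mul]
  | single h c =>
    rw [cjE_single]
    simp [MonoidAlgebra.single_mul_single]

theorem sgE_cjE (ℓ : ℕ) (k : Type) [Field k] [IsAlgClosed k] [Fact ℓ.Prime] [CharP k ℓ]
    {Ghat : Type} [Group Ghat] (G : Subgroup Ghat)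
    [G.Normal] (g : Ghat) (x : MonoidAlgebra k G) :
    sgE ℓ k G (cjE k G g x) = cjE k G g (sgE ℓ k G x) := by
  induction x using MonoidAlgebra.induction_linear with
  | zero => simp
  | add x y hx hy => simp only [map_add, hx, hy]
  | single h c => simp only [cjE_single, sgE_single]

theorem map_sgE (ℓ : ℕ) (k : Type) [Field k] [IsAlgClosed k] [Fact ℓ.Prime] [CharP k ℓ]
    {Ghat : Type} [Group Ghat] (G : Subgroup Ghat) (x : MonoidAlgebra k G) :
    MonoidAlgebra.mapDomainRingHom k G.subtype (sgE ℓ k G x) =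
      sgE ℓ k Ghat (MonoidAlgebra.mapDomainRingHom k G.subtype x) := by
  induction x using MonoidAlgebra.induction_linear with
  | zero => simp
  | add x y hx hy => simp only [map_add, hx, hy]
  | single h c =>
    rw [sgE_single]
    simp [sgE_single]

theorem sgE_smul (ℓ : ℕ) (k : Type) [Field k] [IsAlgClosed k] [Fact ℓ.Prime] [CharP k ℓ]
    (G : Type) [Group G] (c : k) (x : MonoidAlgebra k G) :
    sgE ℓ k G (c • x) = c ^ ℓ • sgE ℓ k G x := by
  ext a
  simp [sgE, frobenius_def, mul_pow]

theorem IsCentralIdem.map {R S : Type*} [Ring R] [Ring S] (f : R ≃+* S) {b : R}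
    (hb : IsCentralIdem b) : IsCentralIdem (f b) := by
  refine ⟨fun x => ?_, by rw [← map_mul, hb.2]⟩
  obtain ⟨y, rfl⟩ := f.surjective x
  rw [← map_mul, ← map_mul, hb.1]

theorem IsBlock.map {R S : Type*} [Ring R] [Ring S] (f : R ≃+* S) {b : R}
    (hb : IsBlock b) : IsBlock (f b) := by
  refine ⟨hb.1.map f, by simpa using hb.2.1, fun c d hc hd hcd h => ?_⟩
  have := hb.2.2 (f.symm c) (f.symm d) (hc.map f.symm) (hd.map f.symm)
    (by rw [← map_mul, hcd, map_zero]) (by rw [← map_add, ← h]; simp)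
  simpa using this

/-- A block is either killed or fixed by a central idempotent. -/
theorem IsBlock.dichotomy {R : Type*} [Ring R] {b c : R} (hb : IsBlock b)
    (hc : IsCentralIdem c) : b * c = 0 ∨ b * c = b := by
  obtain ⟨⟨hz, hi⟩, -, hp⟩ := hb
  have h1 : IsCentralIdem (b * c) := by
    refine ⟨fun x => ?_, ?_⟩
    · rw [mul_assoc, hc.1, ← mul_assoc, hz, mul_assoc]
    · rw [mul_assoc, ← mul_assoc c, hc.1 b, mul_assoc, hc.2, ← mul_assoc, hi]
  have h2 : IsCentralIdem (b - b * c) := by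
    refine ⟨fun x => ?_, ?_⟩
    · rw [sub_mul, mul_sub, h1.1, hz]
    · have e1 : b * (b * c) = b * c := by rw [← mul_assoc, hi]
      rw [sub_mul, mul_sub, mul_sub, h1.2, h1.1 b, e1, hi]; simp
  rcases hp _ _ h1 h2 (by rw [mul_sub, h1.1 b, ← mul_assoc, hi, h1.2, sub_self]) (by simp) with h | h
  · exact .inl h
  · exact .inr (sub_eq_zero.1 h).symm

theorem IsBlock.eq_of_mul_ne {R : Type*} [Ring R] {b c : R} (hb : IsBlock b)
    (hc : IsBlock c) (h : b * c ≠ 0) : b = c := by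
  have h1 := (hb.dichotomy hc.1).resolve_left h
  have h2 := (hc.dichotomy hb.1).resolve_left (by rwa [hc.1.1])
  rw [← h1, hb.1.1, h2]

theorem exists_conj (ℓ : ℕ) [Fact ℓ.Prime] (k : Type) [Field k] [IsAlgClosed k] [CharP k ℓ]
    (Ghat : Type) [Group Ghat] [Fintype Ghat] (G : Subgroup Ghat) [G.Normal]
    (b : MonoidAlgebra k G) (hb : IsBlock b)
    (B : MonoidAlgebra k Ghat) (hB : IsBlock B)
    (hcover : B * (MonoidAlgebra.mapDomainRingHom k G.subtype b) ≠ 0)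
    (hBfix : sgE ℓ k Ghat B = B) : ∃ g, cjE k G g b = sgE ℓ k G b := by
  classical
  set ι := MonoidAlgebra.mapDomainRingHom k G.subtype with hι
  have hblk : ∀ g, IsBlock (cjE k G g b) := fun g => hb.map (cjE k G g).toRingEquiv
  let S := Finset.univ.image (fun g => cjE k G g b)
  let e := ∑ c ∈ S, c
  have hS : ∀ c ∈ S, ∃ g, cjE k G g b = c := fun c hc => by simpa [S] using hc
  have hSb : ∀ c ∈ S, IsBlock c := fun c hc => by obtain ⟨g, rfl⟩ := hS c hc; exact hblk g
  have hec : ∀ c ∈ S, e * c = c := fun c hc => by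
    rw [Finset.sum_mul, Finset.sum_eq_single c]
    · exact (hSb c hc).1.2
    · intro d hd hne
      by_contra h
      exact hne ((hSb d hd).eq_of_mul_ne (hSb c hc) h)
    · exact fun h => absurd hc h
  have hee : e * e = e := by
    conv_lhs => rw [show e * e = e * ∑ c ∈ S, c from rfl, Finset.mul_sum]
    exact Finset.sum_congr rfl hec
  have hbS : b ∈ S := Finset.mem_image.2 ⟨1, Finset.mem_univ _, by simp⟩
  have hinv : ∀ g, cjE k G g e = e := fun g => by
    rw [map_sum]
    refine Finset.sum_bij (fun c _ => cjE k G g c) ?_ ?_ ?_ ?_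
    · intro c hc
      obtain ⟨h, rfl⟩ := hS c hc
      exact Finset.mem_image.2 ⟨g * h, Finset.mem_univ _, by simp⟩
    · intro c _ d _ h; exact (cjE k G g).injective h
    · intro c hc
      obtain ⟨h, rfl⟩ := hS c hc
      refine ⟨cjE k G (g⁻¹ * h) b, Finset.mem_image.2 ⟨_, Finset.mem_univ _, rfl⟩, ?_⟩
      rw [← AlgEquiv.mul_apply, ← map_mul]; simp
    · intros; rfl
  have hcent : IsCentralIdem (ι e) := by
    refine ⟨fun x => ?_, by rw [← map_mul, hee]⟩
    induction x using MonoidAlgebra.induction_linear with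
    | zero => simp
    | add x y hx hy => rw [mul_add, add_mul, hx, hy]
    | single g c =>
      have h := map_cjE k G g e
      rw [hinv] at h
      have h2 : ι e * MonoidAlgebra.single g 1 = MonoidAlgebra.single g 1 * ι e := by
        conv_lhs => rw [hι, h]
        rw [mul_assoc, MonoidAlgebra.single_mul_single]
        rw [inv_mul_cancel, mul_one, ← MonoidAlgebra.one_def, mul_one]
      have h3 : MonoidAlgebra.single g c = c • MonoidAlgebra.single g (1 : k) := by simp
      rw [h3, mul_smul_comm, smul_mul_assoc, h2]
  have hBe : B * ι e = B := by
    refine (hB.dichotomy hcent).resolve_left fun h => hcover ?_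
    rw [← hec b hbS, map_mul, ← mul_assoc, h, zero_mul]
  have hBs : B * ι (sgE ℓ k G e) = B := by
    rw [hι, map_sgE, ← hι]
    conv_lhs => rw [← hBfix, ← map_mul, hBe, hBfix]
  have hne : e * sgE ℓ k G e ≠ 0 := fun h => hB.2.1 (by
    rw [← hBs, ← hBe, mul_assoc, ← map_mul, h, map_zero, mul_zero])
  rw [Finset.sum_mul] at hne
  obtain ⟨c, hc, hne⟩ := Finset.exists_ne_zero_of_sum_ne_zero hne
  rw [map_sum, Finset.mul_sum] at hne
  obtain ⟨d, hd, hne⟩ := Finset.exists_ne_zero_of_sum_ne_zero hne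
  have heq := (hSb c hc).eq_of_mul_ne ((hSb d hd).map (sgE ℓ k G)) hne
  obtain ⟨g, rfl⟩ := hS c hc
  obtain ⟨h, rfl⟩ := hS d hd
  refine ⟨h⁻¹ * g, ?_⟩
  rw [map_mul, AlgEquiv.mul_apply, heq, sgE_cjE, ← AlgEquiv.mul_apply, ← map_mul]
  simp




/-- Let `G ⊴ Ghat`, let `b` be a block of `kG` and `B` a block of `kGhat` covering `b`
(i.e. `B·b ≠ 0` inside `kGhat`) with `σ(B) = B`.  Then `b` and `σ(b)` are `Ghat`-conjugate:
there is `ghat ∈ Ghat` with `ghat b ghat⁻¹ = σ(b)`; and consequently `kG·b` is isomorphic as a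
`k`-algebra to its first Frobenius twist, so in particular `mf(kGb) = 1`. -/
theorem covered_block_galois_stable_cover_conjugate_and_iso_twist
    (ℓ : ℕ) [Fact ℓ.Prime] (k : Type) [Field k] [IsAlgClosed k] [CharP k ℓ]
    [Algebra (ZMod ℓ) k] [IsAlgClosure (ZMod ℓ) k]
    (Ghat : Type) [Group Ghat] [Fintype Ghat] (G : Subgroup Ghat) [G.Normal]
    (b : MonoidAlgebra k G) (hb : IsBlock b)
    (B : MonoidAlgebra k Ghat) (hB : IsBlock B)
    (hcover : B * (MonoidAlgebra.mapDomainRingHom k G.subtype b) ≠ 0)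
    (hBfix : galois ℓ k B = B) :
    (∃ ghat : Ghat, MonoidAlgebra.single ghat (1 : k) *
        (MonoidAlgebra.mapDomainRingHom k G.subtype b) *
        MonoidAlgebra.single ghat⁻¹ (1 : k) =
        MonoidAlgebra.mapDomainRingHom k G.subtype (galois ℓ k b)) ∧
    ∃ ψ : MonoidAlgebra k G → MonoidAlgebra k G,
      Set.BijOn ψ (cornerSet b) (cornerSet b) ∧
      (∀ x ∈ cornerSet b, ∀ y ∈ cornerSet b, ψ (x + y) = ψ x + ψ y) ∧
      (∀ x ∈ cornerSet b, ∀ y ∈ cornerSet b, ψ (x * y) = ψ x * ψ y) ∧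
      (∀ (c : k), ∀ x ∈ cornerSet b, ψ (c • x) = c ^ ℓ • ψ x) := by
  have hfix' : sgE ℓ k Ghat B = B := by rw [sgE_apply, hBfix]
  obtain ⟨g, hg⟩ := exists_conj ℓ k Ghat G b hb B hB hcover hfix'
  refine ⟨⟨g, by rw [← map_cjE, hg, sgE_apply]⟩, ?_⟩
  let φ : MonoidAlgebra k G ≃+* MonoidAlgebra k G :=
    (sgE ℓ k G).trans (cjE k G g⁻¹).toRingEquiv
  have hφ : ∀ x, φ x = cjE k G g⁻¹ (sgE ℓ k G x) := fun _ => rfl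
  have hφb : φ b = b := by
    rw [hφ, ← hg, ← AlgEquiv.mul_apply, ← map_mul]; simp
  refine ⟨φ, ⟨?_, φ.injective.injOn, ?_⟩, fun x _ y _ => map_add φ x y,
    fun x _ y _ => map_mul φ x y, fun c x _ => ?_⟩
  · intro x (hx : x * b = x)
    change φ x * b = φ x
    conv_lhs => rw [← hφb, ← map_mul, hx]
  · intro y (hy : y * b = y)
    refine ⟨φ.symm y, ?_, by simp⟩
    change φ.symm y * b = φ.symm y
    apply φ.injective
    rw [map_mul, hφb]; simpa using hy
  · rw [hφ, hφ, sgE_smul, map_smul]
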